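/- Let σ be a saturation function and V₀(z,y) = ‖y‖² + ∫₀^{‖z‖} S(ξ)dξ + ∫₀^{‖z−y‖} S(ξ)dξ. There exist ε₀>0, R>0, C₁>0 and ρ∈(0,1) such that for every ε∈(0,ε₀) and every (z₀,y₀)∈ℝ²×ℝ² with V₀(z₀,y₀) ≥ R, there exists a time T(z₀,y₀) with ρ·max(1,‖y₀‖) ≤ T(z₀,y₀) ≤ 2ρ·max(1,‖y₀‖) such that, along every solution (z(t),y(t)) of (T_ε) with (z(0),y(0)) = (z₀,y₀), one has V₀(z(T(z₀,y₀)),y(T(z₀,y₀))) − V₀(z₀,y₀) ≤ −C₁·T(z₀,y₀). -/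

import Mathlib

open Real Filter MeasureTheory intervalIntegral RealInnerProductSpace

noncomputable section

/-- A saturation function: odd, globally Lipschitz, sign-definite, with finite positive limits
of `σ` at `+∞` and of `σ ξ / ξ` at `0`, non-decreasing, differentiable on `(0,∞)` with
non-increasing derivative there. -/
def IsSaturation (σ : ℝ → ℝ) : Prop :=
  (∀ ξ, σ (-ξ) = -σ ξ) ∧
  (∃ L : NNReal, LipschitzWith L σ) ∧
  (∀ ξ : ℝ, ξ ≠ 0 → σ ξ * ξ > 0) ∧
  (∃ l > 0, Tendsto σ atTop (nhds l)) ∧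
  (∃ l > 0, Tendsto (fun ξ => σ ξ / ξ) (nhdsWithin 0 {(0:ℝ)}ᶜ) (nhds l)) ∧
  Monotone σ ∧
  DifferentiableOn ℝ σ (Set.Ioi 0) ∧
  AntitoneOn (deriv σ) (Set.Ioi 0)

/-- The modified saturation function `S` associated with `σ`:
`S ξ = (2/π) ∫_0^{π/2} sin v · σ(ξ sin v) dv`. -/
def modSat (σ : ℝ → ℝ) (ξ : ℝ) : ℝ :=
  (2 / Real.pi) * ∫ v in (0:ℝ)..(Real.pi / 2), Real.sin v * σ (ξ * Real.sin v)

abbrev E2 := EuclideanSpace ℝ (Fin 2)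

open Classical in
/-- The radial vector field `f(z) = S(‖z‖) z / ‖z‖`, `f(0) = 0`. -/
def fvec (σ : ℝ → ℝ) (z : E2) : E2 :=
  if z = 0 then 0 else (modSat σ ‖z‖ / ‖z‖) • z

/-- `b_ε(t) = R_{-2πt/ε} e₂ = (sin(2πt/ε), cos(2πt/ε))`. -/
def bvp (ε t : ℝ) : E2 :=
  (WithLp.equiv 2 (Fin 2 → ℝ)).symm ![Real.sin (2 * Real.pi * t / ε), Real.cos (2 * Real.pi * t / ε)]

/-- The Lyapunov function `V₀(z,y) = ‖y‖² + ∫₀^{‖z‖} S + ∫₀^{‖z-y‖} S`. -/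
def V0 (σ : ℝ → ℝ) (z y : E2) : ℝ :=
  ‖y‖ ^ 2 + (∫ ξ in (0:ℝ)..‖z‖, modSat σ ξ) + ∫ ξ in (0:ℝ)..‖z - y‖, modSat σ ξ

/-- `(z, y)` solves the time-varying system `(T_ε)`:
`ż = y - b_ε(t) σ(b_ε(t)ᵀ z)`, `ẏ = - b_ε(t) σ(b_ε(t)ᵀ z)`, for `t ≥ 0`. -/
def IsSolTeps (σ : ℝ → ℝ) (ε : ℝ) (z y : ℝ → E2) : Prop :=
  ∀ t : ℝ, 0 ≤ t →
    HasDerivAt z (y t - σ ⟪bvp ε t, z t⟫ • bvp ε t) t ∧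
    HasDerivAt y (-(σ ⟪bvp ε t, z t⟫) • bvp ε t) t

/-!
Over one period of the phase, the feedback `b σ(bᵀz)` has mean `f(z) = S(‖z‖) z / ‖z‖`,
the gradient of the radial potential `∫₀^{‖z‖} S`. Along the averaged system `ż = y - f(z)`,
`ẏ = -f(z)`, the function `V₀` therefore decreases at the rate
`‖f(z)‖² + ⟪y, f(z) - f(z - y)⟫`, which by monotonicity of `σ` is bounded below as soon as `z` or
`y` is large.

The oscillating part of the derivative of `V₀` is removed by adding `ε / 2π` times the pairing of
`2y + f(z)` with a primitive in the phase of the deviation from the mean. The derivative of this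
correction contains terms quadratic in `y`, but only weighted by `σ'`: they are all bounded by the
form `⟪y, Df(z) y⟫`, and subtracting a multiple of `⟪y, f(z)⟫` from the correction absorbs them.
What is left is `O(ε)`. The correction itself grows linearly in `y`, so integrating over a time
comparable to `max(1, ‖y₀‖)` turns its boundary values into another `O(ε)` contribution to the
decay rate.
-/

section Calculus

variable {E : Type*} [NormedAddCommGroup E] [NormedSpace ℝ E]

theorem hasDerivAt_intervalIntegral_of_norm_sub_le {g : ℝ → ℝ → E} {g' : ℝ → E} {bound : ℝ → ℝ}
    {t₀ a b : ℝ} (hg : ∀ t, IntervalIntegrable (g t) volume a b)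
    (hbound : IntervalIntegrable bound volume a b)
    (hlip : ∀ᶠ t in nhds t₀, ∀ s, ‖g t s - g t₀ s‖ ≤ bound s * ‖t - t₀‖)
    (hg' : ∀ s, HasDerivAt (g · s) (g' s) t₀) :
    HasDerivAt (fun t => ∫ s in a..b, g t s) (∫ s in a..b, g' s) t₀ := by
  have slope_integral : ∀ t, slope (fun t => ∫ s in a..b, g t s) t₀ t =
      ∫ s in a..b, slope (g · s) t₀ t := fun t => by
    simp only [slope_def_module]
    rw [intervalIntegral.integral_smul, intervalIntegral.integral_sub (hg t) (hg t₀)]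
  rw [hasDerivAt_iff_tendsto_slope, funext slope_integral]
  refine intervalIntegral.tendsto_integral_filter_of_dominated_convergence bound
    (.of_forall fun t => ?_) ?_ hbound
    (.of_forall fun s _ => hasDerivAt_iff_tendsto_slope.1 (hg' s))
  · simp only [slope_def_module]
    exact (((hg t).sub (hg t₀)).smul (t - t₀)⁻¹).def'.aestronglyMeasurable
  · filter_upwards [hlip.filter_mono nhdsWithin_le_nhds, self_mem_nhdsWithin] with t ht hne
    refine .of_forall fun s _ => ?_
    have hpos : 0 < ‖t - t₀‖ := norm_pos_iff.2 (sub_ne_zero.2 hne)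
    rw [slope_def_module, norm_smul, norm_inv, inv_mul_le_iff₀ hpos, mul_comm]
    exact ht s

theorem intervalIntegrable_deriv_comp_of_lipschitzWith {σ q : ℝ → ℝ} {L : NNReal}
    (hσ : LipschitzWith L σ) (hq : Continuous q) (a b : ℝ) :
    IntervalIntegrable (fun s => deriv σ (q s)) volume a b :=
  (intervalIntegrable_const (c := (L : ℝ))).mono_fun
    ((measurable_deriv σ).comp hq.measurable).aestronglyMeasurable
    (.of_forall fun s => by simpa using norm_deriv_le_of_lipschitz hσ)

theorem hasGradientAt_comp_norm {F : Type*} [NormedAddCommGroup F] [InnerProductSpace ℝ F]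
    [CompleteSpace F] {p : ℝ → ℝ} {p' : ℝ} {x : F} (hp : HasDerivAt p p' ‖x‖)
    (hx : x = 0 → p' = 0) : HasGradientAt (fun x => p ‖x‖) ((p' / ‖x‖) • x) x := by
  rw [hasGradientAt_iff_hasFDerivAt]
  rcases eq_or_ne x 0 with rfl | hx0
  · rw [hx rfl, norm_zero] at hp
    rw [hasFDerivAt_iff_isLittleO]
    have h := (hasDerivAt_iff_isLittleO.1 hp).comp_tendsto (tendsto_norm_zero (E := F))
    simp only [Function.comp_def, sub_zero, smul_zero] at h
    simpa using Asymptotics.isLittleO_norm_right.1 h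
  · have hnorm := (hasStrictFDerivAt_norm_sq x).hasFDerivAt.sqrt (by positivity)
    simp only [Real.sqrt_sq (norm_nonneg _)] at hnorm
    refine (hp.comp_hasFDerivAt x hnorm).congr_fderiv ?_
    ext v
    simp only [smul_apply, innerSL_apply_apply,
      InnerProductSpace.toDual_apply_apply, real_inner_smul_left, smul_eq_mul]
    have := norm_ne_zero_iff.2 hx0
    field_simp
    simp only [nsmul_eq_mul, Nat.cast_ofNat]
    ring

end Calculus

section PhaseMean

variable {E : Type*} [NormedAddCommGroup E] [NormedSpace ℝ E]

/-- The mean value over one period of a `2π`-periodic function of the phase. -/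
def phaseMean (g : ℝ → E) : E := (2 * π)⁻¹ • ∫ s in (0 : ℝ)..(2 * π), g s

theorem phaseMean_const [CompleteSpace E] (c : E) : phaseMean (fun _ => c) = c := by
  rw [phaseMean, intervalIntegral.integral_const, sub_zero, inv_smul_smul₀ (by positivity)]

theorem phaseMean_const_smul (c : ℝ) (g : ℝ → E) :
    phaseMean (fun s => c • g s) = c • phaseMean g := by
  rw [phaseMean, intervalIntegral.integral_smul, smul_comm, phaseMean]

theorem phaseMean_const_mul (c : ℝ) (g : ℝ → ℝ) :
    phaseMean (fun s => c * g s) = c * phaseMean g :=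
  phaseMean_const_smul c g

theorem phaseMean_smul_const [CompleteSpace E] (g : ℝ → ℝ) (c : E) :
    phaseMean (fun s => g s • c) = phaseMean g • c := by
  rw [phaseMean, intervalIntegral.integral_smul_const, smul_smul, phaseMean, smul_eq_mul]

theorem phaseMean_add {f g : ℝ → E} (hf : IntervalIntegrable f volume 0 (2 * π))
    (hg : IntervalIntegrable g volume 0 (2 * π)) :
    phaseMean (fun s => f s + g s) = phaseMean f + phaseMean g := by
  rw [phaseMean, intervalIntegral.integral_add hf hg, smul_add, phaseMean, phaseMean]

theorem phaseMean_sub {f g : ℝ → E} (hf : IntervalIntegrable f volume 0 (2 * π))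
    (hg : IntervalIntegrable g volume 0 (2 * π)) :
    phaseMean (fun s => f s - g s) = phaseMean f - phaseMean g := by
  rw [phaseMean, intervalIntegral.integral_sub hf hg, smul_sub, phaseMean, phaseMean]

theorem phaseMean_mono {f g : ℝ → ℝ} (hf : IntervalIntegrable f volume 0 (2 * π))
    (hg : IntervalIntegrable g volume 0 (2 * π)) (hfg : ∀ s, f s ≤ g s) :
    phaseMean f ≤ phaseMean g :=
  mul_le_mul_of_nonneg_left (intervalIntegral.integral_mono (by positivity) hf hg hfg)
    (by positivity)

theorem norm_phaseMean_le (g : ℝ → E) : ‖phaseMean g‖ ≤ phaseMean fun s => ‖g s‖ := by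
  rw [phaseMean, norm_smul, Real.norm_of_nonneg (by positivity)]
  exact mul_le_mul_of_nonneg_left
    (intervalIntegral.norm_integral_le_integral_norm (by positivity)) (by positivity)

theorem phaseMean_comp_add_left {g : ℝ → E} (hg : Function.Periodic g (2 * π)) (θ : ℝ) :
    phaseMean (fun s => g (θ + s)) = phaseMean g := by
  rw [phaseMean, intervalIntegral.integral_comp_add_left g, add_zero,
    hg.intervalIntegral_add_eq θ 0, zero_add, phaseMean]

theorem norm_phaseMean_smul_comp_add_left_le {g : ℝ → E} (hg : Function.Periodic g (2 * π))
    (hint : ∀ a b, IntervalIntegrable g volume a b) (θ : ℝ) :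
    ‖phaseMean fun s => s • g (θ + s)‖ ≤ 2 * π * phaseMean fun s => ‖g s‖ := by
  have hnorm : Function.Periodic (fun s => ‖g s‖) (2 * π) := hg.comp norm
  rw [← phaseMean_comp_add_left hnorm θ, ← phaseMean_const_mul, phaseMean, norm_smul,
    Real.norm_of_nonneg (by positivity)]
  have hshift : IntervalIntegrable (fun s => ‖g (θ + s)‖) volume 0 (2 * π) := by
    simpa using ((hint θ (θ + 2 * π)).comp_add_left θ).norm
  refine mul_le_mul_of_nonneg_left ?_ (by positivity)
  refine intervalIntegral.norm_integral_le_of_norm_le (by positivity) (.of_forall fun s hs => ?_)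
    (hshift.const_mul _)
  rw [norm_smul, Real.norm_of_nonneg hs.1.le]
  exact mul_le_mul_of_nonneg_right hs.2 (norm_nonneg _)

theorem inner_phaseMean {F : Type*} [NormedAddCommGroup F] [InnerProductSpace ℝ F]
    [CompleteSpace F] {g : ℝ → F} (hg : IntervalIntegrable g volume 0 (2 * π)) (v : F) :
    ⟪v, phaseMean g⟫ = phaseMean fun s => ⟪v, g s⟫ := by
  rw [phaseMean, inner_smul_right, phaseMean, smul_eq_mul]
  congr 1
  exact ((innerSL ℝ v).intervalIntegral_comp_comm hg).symm

end PhaseMean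

section PhaseVec

/-- The unit vector at phase `θ` of the rotating direction: `b_ε(t)` is `phaseVec (2πt/ε)`.
Its derivative is `phaseVec (θ + π / 2)`, so no separate notation is used for it. -/
def phaseVec (θ : ℝ) : E2 := !₂[Real.sin θ, Real.cos θ]

theorem bvp_eq_phaseVec (ε t : ℝ) : bvp ε t = phaseVec (2 * π / ε * t) := by
  rw [phaseVec, ← mul_div_right_comm]
  rfl

theorem inner_phaseVec (θ : ℝ) (v : E2) :
    ⟪phaseVec θ, v⟫ = Real.sin θ * v 0 + Real.cos θ * v 1 := by
  simp [phaseVec, PiLp.inner_apply, mul_comm]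

theorem inner_phaseVec_phaseVec (θ φ : ℝ) : ⟪phaseVec θ, phaseVec φ⟫ = Real.cos (θ - φ) := by
  rw [inner_phaseVec, Real.cos_sub, add_comm]
  rfl

@[simp]
theorem norm_phaseVec (θ : ℝ) : ‖phaseVec θ‖ = 1 := by
  simp [EuclideanSpace.norm_eq, phaseVec]

theorem abs_inner_phaseVec_le (θ : ℝ) (v : E2) : |⟪phaseVec θ, v⟫| ≤ ‖v‖ := by
  simpa using abs_real_inner_le_norm (phaseVec θ) v

theorem periodic_phaseVec : Function.Periodic phaseVec (2 * π) := fun θ => by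
  simp [phaseVec]

theorem phaseVec_add (θ φ : ℝ) :
    phaseVec (θ + φ) = Real.cos θ • phaseVec φ + Real.sin θ • phaseVec (φ + π / 2) := by
  ext i
  fin_cases i
  · simp [phaseVec, Real.sin_add, add_comm]
  · simp [phaseVec, Real.cos_add, sub_eq_add_neg]

theorem hasDerivAt_phaseVec (θ : ℝ) : HasDerivAt phaseVec (phaseVec (θ + π / 2)) θ := by
  have hcoord : HasDerivAt (fun θ => ![Real.sin θ, Real.cos θ]) ![Real.cos θ, -Real.sin θ] θ := by
    refine hasDerivAt_pi.2 fun i => ?_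
    fin_cases i
    · exact Real.hasDerivAt_sin θ
    · exact Real.hasDerivAt_cos θ
  rw [phaseVec, Real.sin_add_pi_div_two, Real.cos_add_pi_div_two]
  exact (PiLp.hasFDerivAt_toLp (𝕜 := ℝ) 2 _).comp_hasDerivAt θ hcoord

@[fun_prop]
theorem continuous_phaseVec : Continuous phaseVec :=
  continuous_iff_continuousAt.2 fun θ => (hasDerivAt_phaseVec θ).continuousAt

theorem norm_phaseVec_sub_le (θ φ : ℝ) : ‖phaseVec θ - phaseVec φ‖ ≤ |θ - φ| := by
  simpa using Convex.norm_image_sub_le_of_norm_hasDerivWithin_le (C := 1)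
    (fun x _ => (hasDerivAt_phaseVec x).hasDerivWithinAt) (fun x _ => (norm_phaseVec _).le)
    convex_univ (Set.mem_univ φ) (Set.mem_univ θ)

theorem exists_norm_smul_phaseVec_eq (z : E2) : ∃ φ, ‖z‖ • phaseVec φ = z := by
  set w : ℂ := ⟨z 1, z 0⟩ with hw
  have hnorm : ‖z‖ = ‖w‖ := by
    simp [EuclideanSpace.norm_eq, Complex.norm_eq_sqrt_sq_add_sq, Fin.sum_univ_two, hw, add_comm]
  refine ⟨w.arg, ?_⟩
  ext i
  fin_cases i
  · exact (congrArg (· * Real.sin w.arg) hnorm).trans (Complex.norm_mul_sin_arg w)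
  · exact (congrArg (· * Real.cos w.arg) hnorm).trans (Complex.norm_mul_cos_arg w)

theorem phaseMean_sq_inner_phaseVec (v : E2) :
    phaseMean (fun s => ⟪phaseVec s, v⟫ ^ 2) = ‖v‖ ^ 2 / 2 := by
  have expand : ∀ s, ⟪phaseVec s, v⟫ ^ 2 = v 0 ^ 2 * Real.sin s ^ 2 + v 1 ^ 2 * Real.cos s ^ 2
      + 2 * v 0 * v 1 * (Real.sin s * Real.cos s) := fun s => by
    rw [inner_phaseVec]
    ring
  simp only [phaseMean, expand]
  rw [intervalIntegral.integral_add, intervalIntegral.integral_add,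
    intervalIntegral.integral_const_mul, intervalIntegral.integral_const_mul,
    intervalIntegral.integral_const_mul, integral_sin_sq, integral_cos_sq, integral_sin_mul_cos₁]
  · simp [EuclideanSpace.norm_sq_eq, Fin.sum_univ_two]
    field_simp
  all_goals exact Continuous.intervalIntegrable (by fun_prop) _ _

theorem norm_div_two_le_phaseMean_abs_inner (v : E2) :
    ‖v‖ / 2 ≤ phaseMean fun s => |⟪phaseVec s, v⟫| := by
  have hsq : ‖v‖ * (‖v‖ / 2) ≤ ‖v‖ * phaseMean fun s => |⟪phaseVec s, v⟫| :=
    calc ‖v‖ * (‖v‖ / 2) = phaseMean (fun s => ⟪phaseVec s, v⟫ ^ 2) := by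
          rw [phaseMean_sq_inner_phaseVec]
          ring
      _ ≤ phaseMean (fun s => ‖v‖ * |⟪phaseVec s, v⟫|) := by
          refine phaseMean_mono (Continuous.intervalIntegrable (by fun_prop) _ _)
            (Continuous.intervalIntegrable (by fun_prop) _ _) fun s => ?_
          rw [← sq_abs, sq]
          exact mul_le_mul_of_nonneg_right (abs_inner_phaseVec_le s v) (abs_nonneg _)
      _ = _ := phaseMean_const_mul _ _
  rcases (norm_nonneg v).eq_or_lt with h0 | hpos
  · rw [← h0, zero_div, ← phaseMean_const (0 : ℝ)]
    exact phaseMean_mono (by simp) (Continuous.intervalIntegrable (by fun_prop) _ _)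
      fun s => abs_nonneg _
  · exact le_of_mul_le_mul_left hsq hpos

end PhaseVec

section Saturation

/-- A weak saturation function, possibly with a dead zone: odd, bounded by `A`, `L`-Lipschitz,
non-decreasing, differentiable and not identically zero. This is the class of feedback laws for
which the averaging argument works. -/
structure IsWeakSaturation (σ : ℝ → ℝ) (A : ℝ) (L : NNReal) : Prop where
  odd : ∀ x, σ (-x) = -σ x
  abs_map_le : ∀ x, |σ x| ≤ A
  lipschitz : LipschitzWith L σ
  monotone : Monotone σ
  differentiable : Differentiable ℝ σ
  exists_pos : ∃ x, 0 < σ x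

variable {σ : ℝ → ℝ} {A : ℝ} {L : NNReal}

namespace IsWeakSaturation

theorem map_zero (hσ : IsWeakSaturation σ A L) : σ 0 = 0 := by
  simpa [eq_neg_iff_add_eq_zero] using hσ.odd 0

theorem bound_nonneg (hσ : IsWeakSaturation σ A L) : 0 ≤ A :=
  (abs_nonneg _).trans (hσ.abs_map_le 0)

theorem continuous (hσ : IsWeakSaturation σ A L) : Continuous σ :=
  hσ.lipschitz.continuous

theorem deriv_nonneg (hσ : IsWeakSaturation σ A L) (x : ℝ) : 0 ≤ deriv σ x :=
  hσ.monotone.deriv_nonneg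

theorem deriv_le (hσ : IsWeakSaturation σ A L) (x : ℝ) : deriv σ x ≤ L :=
  (le_abs_self _).trans (norm_deriv_le_of_lipschitz hσ.lipschitz)

theorem intervalIntegrable_deriv_comp (hσ : IsWeakSaturation σ A L) {q : ℝ → ℝ}
    (hq : Continuous q) (a b : ℝ) : IntervalIntegrable (fun s => deriv σ (q s)) volume a b :=
  intervalIntegrable_deriv_comp_of_lipschitzWith hσ.lipschitz hq a b

end IsWeakSaturation

theorem IsSaturation.differentiable (hσ : IsSaturation σ) : Differentiable ℝ σ := by
  obtain ⟨odd, -, -, -, ⟨l, -, slope_at_zero⟩, -, differentiableOn, -⟩ := hσ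
  have map_zero : σ 0 = 0 := by simpa [eq_neg_iff_add_eq_zero] using odd 0
  have differentiableAt_pos : ∀ x, 0 < x → DifferentiableAt ℝ σ x := fun x hx =>
    (differentiableOn x hx).differentiableAt (Ioi_mem_nhds hx)
  intro x
  rcases lt_trichotomy x 0 with hx | rfl | hx
  · have hneg := (differentiableAt_pos (-x) (neg_pos.2 hx)).comp x differentiableAt_id.neg
    exact hneg.neg.congr_of_eventuallyEq (.of_forall fun y => by simp [odd])
  · have hderiv : HasDerivAt σ l 0 := hasDerivAt_iff_tendsto_slope.2 <|
      slope_at_zero.congr fun y => by simp [slope_def_field, map_zero]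
    exact hderiv.differentiableAt
  · exact differentiableAt_pos x hx

theorem IsSaturation.exists_isWeakSaturation (hσ : IsSaturation σ) :
    ∃ A L, IsWeakSaturation σ A L := by
  have hdiff := hσ.differentiable
  obtain ⟨odd, ⟨L, hL⟩, pos, ⟨A, -, hlim⟩, -, mono, -, -⟩ := hσ
  have map_le : ∀ x, σ x ≤ A := mono.ge_of_tendsto hlim
  refine ⟨A, L, odd, fun x => abs_le.2 ⟨?_, map_le x⟩, hL, mono, hdiff, 1, ?_⟩
  · linarith [map_le (-x), odd x]
  · simpa using pos 1 one_ne_zero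

end Saturation

section Feedback

variable {σ : ℝ → ℝ} {A : ℝ} {L : NNReal}

/-- The saturated feedback `b σ(bᵀz)` in the direction `b` of phase `θ`. -/
def feedback (σ : ℝ → ℝ) (θ : ℝ) (z : E2) : E2 := σ ⟪phaseVec θ, z⟫ • phaseVec θ

/-- The differential of `feedback σ θ` at `z`, applied to `v`. -/
def feedbackDeriv (σ : ℝ → ℝ) (θ : ℝ) (z v : E2) : E2 :=
  (deriv σ ⟪phaseVec θ, z⟫ * ⟪phaseVec θ, v⟫) • phaseVec θ

/-- The derivative of `feedback σ θ z` with respect to the phase `θ`. -/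
def feedbackPhaseDeriv (σ : ℝ → ℝ) (θ : ℝ) (z : E2) : E2 :=
  (deriv σ ⟪phaseVec θ, z⟫ * ⟪phaseVec (θ + π / 2), z⟫) • phaseVec θ
    + σ ⟪phaseVec θ, z⟫ • phaseVec (θ + π / 2)

theorem periodic_feedback (z : E2) : Function.Periodic (feedback σ · z) (2 * π) := fun θ => by
  simp only [feedback, periodic_phaseVec θ]

theorem periodic_feedbackDeriv (z v : E2) :
    Function.Periodic (feedbackDeriv σ · z v) (2 * π) := fun θ => by
  simp only [feedbackDeriv, periodic_phaseVec θ]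

theorem hasDerivAt_feedback (hσ : Differentiable ℝ σ) {θ : ℝ → ℝ} {z : ℝ → E2} {θ' t : ℝ}
    {z' : E2} (hθ : HasDerivAt θ θ' t) (hz : HasDerivAt z z' t) :
    HasDerivAt (fun r => feedback σ (θ r) (z r))
      (θ' • feedbackPhaseDeriv σ (θ t) (z t) + feedbackDeriv σ (θ t) (z t) z') t := by
  have hdir : HasDerivAt (fun r => phaseVec (θ r)) (θ' • phaseVec (θ t + π / 2)) t :=
    (hasDerivAt_phaseVec (θ t)).scomp t hθ
  refine (((hσ _).hasDerivAt.comp t (hdir.inner ℝ hz)).smul hdir).congr_deriv ?_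
  simp only [feedbackPhaseDeriv, feedbackDeriv, Function.comp_apply, real_inner_smul_left]
  module

namespace IsWeakSaturation

theorem norm_feedback_le (hσ : IsWeakSaturation σ A L) (θ : ℝ) (z : E2) :
    ‖feedback σ θ z‖ ≤ A := by
  simpa [feedback, norm_smul] using hσ.abs_map_le _

theorem continuous_feedback (hσ : IsWeakSaturation σ A L) :
    Continuous fun p : ℝ × E2 => feedback σ p.1 p.2 := by
  have := hσ.continuous
  unfold feedback
  fun_prop

theorem norm_feedback_sub_le (hσ : IsWeakSaturation σ A L) (θ φ : ℝ) (z w : E2) :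
    ‖feedback σ θ z - feedback σ φ w‖ ≤ L * ‖z - w‖ + (L * ‖w‖ + A) * |θ - φ| := by
  have inner_sub : ‖⟪phaseVec θ, z⟫ - ⟪phaseVec φ, w⟫‖ ≤ ‖z - w‖ + |θ - φ| * ‖w‖ :=
    calc ‖⟪phaseVec θ, z⟫ - ⟪phaseVec φ, w⟫‖
        = ‖⟪phaseVec θ, z - w⟫ + ⟪phaseVec θ - phaseVec φ, w⟫‖ := by
          rw [inner_sub_right, inner_sub_left, sub_add_sub_cancel]
      _ ≤ ‖z - w‖ + ‖phaseVec θ - phaseVec φ‖ * ‖w‖ :=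
          (norm_add_le _ _).trans (add_le_add (abs_inner_phaseVec_le θ _) (norm_inner_le_norm _ _))
      _ ≤ ‖z - w‖ + |θ - φ| * ‖w‖ := by gcongr; exact norm_phaseVec_sub_le θ φ
  have split : feedback σ θ z - feedback σ φ w =
      (σ ⟪phaseVec θ, z⟫ - σ ⟪phaseVec φ, w⟫) • phaseVec θ
        + σ ⟪phaseVec φ, w⟫ • (phaseVec θ - phaseVec φ) := by
    simp only [feedback]
    module
  calc ‖feedback σ θ z - feedback σ φ w‖
      ≤ ‖σ ⟪phaseVec θ, z⟫ - σ ⟪phaseVec φ, w⟫‖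
          + |σ ⟪phaseVec φ, w⟫| * ‖phaseVec θ - phaseVec φ‖ := by
        rw [split]
        exact (norm_add_le _ _).trans (by simp [norm_smul])
    _ ≤ L * (‖z - w‖ + |θ - φ| * ‖w‖) + A * |θ - φ| :=
        add_le_add ((hσ.lipschitz.norm_sub_le _ _).trans (by gcongr))
          (mul_le_mul (hσ.abs_map_le _) (norm_phaseVec_sub_le θ φ) (norm_nonneg _) hσ.bound_nonneg)
    _ = L * ‖z - w‖ + (L * ‖w‖ + A) * |θ - φ| := by ring

theorem intervalIntegrable_feedbackDeriv (hσ : IsWeakSaturation σ A L) (z v : E2) (a b : ℝ) :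
    IntervalIntegrable (feedbackDeriv σ · z v) volume a b :=
  ((hσ.intervalIntegrable_deriv_comp (by fun_prop) a b).mul_continuousOn
    (by fun_prop)).smul_continuousOn (by fun_prop)

theorem intervalIntegrable_feedbackPhaseDeriv (hσ : IsWeakSaturation σ A L) (z : E2) (a b : ℝ) :
    IntervalIntegrable (feedbackPhaseDeriv σ · z) volume a b := by
  have := hσ.continuous
  exact (((hσ.intervalIntegrable_deriv_comp (by fun_prop) a b).mul_continuousOn
    (by fun_prop)).smul_continuousOn (by fun_prop)).add
      (Continuous.intervalIntegrable (by fun_prop) _ _)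

theorem hasDerivAt_phaseMean_smul_feedback (hσ : IsWeakSaturation σ A L) {w : ℝ → ℝ}
    (hw : Continuous w) {z : ℝ → E2} {z' : E2} {t : ℝ} (hz : HasDerivAt z z' t) (ω : ℝ) :
    HasDerivAt (fun r => phaseMean fun s => w s • feedback σ (ω * r + s) (z r))
      (phaseMean fun s => w s • (ω • feedbackPhaseDeriv σ (ω * t + s) (z t)
        + feedbackDeriv σ (ω * t + s) (z t) z')) t := by
  have := hσ.continuous_feedback
  obtain ⟨K, hK⟩ := hz.isBigO_sub.bound
  refine (hasDerivAt_intervalIntegral_of_norm_sub_le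
    (bound := fun s => |w s| * (L * K + (L * ‖z t‖ + A) * |ω|)) (fun r => ?_) ?_ ?_
    fun s => (hasDerivAt_feedback hσ.differentiable ?_ hz).fun_const_smul (w s)).const_smul
      (2 * π)⁻¹
  · exact Continuous.intervalIntegrable
      (hw.smul (this.comp (f := fun s => (ω * r + s, z r)) (by fun_prop))) _ _
  · exact Continuous.intervalIntegrable (by fun_prop) _ _
  · filter_upwards [hK] with r hr s
    rw [← smul_sub, norm_smul, Real.norm_eq_abs, mul_assoc]
    refine mul_le_mul_of_nonneg_left ?_ (abs_nonneg _)
    calc ‖feedback σ (ω * r + s) (z r) - feedback σ (ω * t + s) (z t)‖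
        ≤ L * ‖z r - z t‖ + (L * ‖z t‖ + A) * |ω * (r - t)| := by
          simpa [mul_sub] using hσ.norm_feedback_sub_le (ω * r + s) (ω * t + s) (z r) (z t)
      _ ≤ L * (K * ‖r - t‖) + (L * ‖z t‖ + A) * |ω * (r - t)| := by gcongr
      _ = (L * K + (L * ‖z t‖ + A) * |ω|) * ‖r - t‖ := by
          rw [abs_mul, Real.norm_eq_abs]
          ring
  · simpa using ((hasDerivAt_id t).const_mul ω).add_const s

end IsWeakSaturation

end Feedback

section AveragedField

variable {σ : ℝ → ℝ} {A : ℝ} {L : NNReal}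

theorem modSat_zero (h0 : σ 0 = 0) : modSat σ 0 = 0 := by
  simp [modSat, h0]

theorem continuous_modSat (hσ : Continuous σ) : Continuous (modSat σ) :=
  continuous_const.mul <|
    intervalIntegral.continuous_parametric_intervalIntegral_of_continuous' (by fun_prop) _ _

theorem abs_modSat_le (hσ : ∀ x, |σ x| ≤ A) (r : ℝ) : |modSat σ r| ≤ A := by
  have integrand_le : ∀ v, ‖Real.sin v * σ (r * Real.sin v)‖ ≤ A := fun v => by
    rw [norm_mul]
    exact (mul_le_of_le_one_left (norm_nonneg _) (Real.abs_sin_le_one v)).trans (hσ _)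
  have abs_integral_le := intervalIntegral.norm_integral_le_of_norm_le_const (a := 0)
    (b := π / 2) fun v _ => integrand_le v
  rw [sub_zero, abs_of_pos Real.pi_div_two_pos, Real.norm_eq_abs] at abs_integral_le
  calc |modSat σ r|
      = 2 / π * |∫ v in (0 : ℝ)..(π / 2), Real.sin v * σ (r * Real.sin v)| := by
        rw [modSat, abs_mul, abs_of_pos (by positivity)]
    _ ≤ 2 / π * (A * (π / 2)) := by gcongr
    _ = A := by field_simp

theorem sin_nonneg_of_mem_Icc_zero_pi_div_two {v : ℝ} (hv : v ∈ Set.Icc 0 (π / 2)) :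
    0 ≤ Real.sin v :=
  Real.sin_nonneg_of_nonneg_of_le_pi hv.1 (hv.2.trans (by linarith [Real.pi_pos]))

theorem monotone_modSat (hcont : Continuous σ) (hmono : Monotone σ) : Monotone (modSat σ) := by
  refine fun r s hrs => mul_le_mul_of_nonneg_left ?_ (by positivity)
  refine intervalIntegral.integral_mono_on Real.pi_div_two_pos.le
    (Continuous.intervalIntegrable (by fun_prop) _ _)
    (Continuous.intervalIntegrable (by fun_prop) _ _) fun v hv => ?_
  have hsin := sin_nonneg_of_mem_Icc_zero_pi_div_two hv
  exact mul_le_mul_of_nonneg_left (hmono (mul_le_mul_of_nonneg_right hrs hsin)) hsin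

theorem modSat_pos (hcont : Continuous σ) (hmono : Monotone σ) (h0 : σ 0 = 0) {r : ℝ}
    (hr : 0 ≤ r) (hσr : 0 < σ r) : 0 < modSat σ r := by
  refine mul_pos (by positivity) (intervalIntegral.integral_pos Real.pi_div_two_pos
    (Continuous.continuousOn (by fun_prop)) (fun v hv => ?_)
    ⟨π / 2, ⟨Real.pi_div_two_pos.le, le_rfl⟩, by simpa using hσr⟩)
  have hsin := sin_nonneg_of_mem_Icc_zero_pi_div_two ⟨hv.1.le, hv.2⟩
  exact mul_nonneg hsin (h0 ▸ hmono (mul_nonneg hr hsin))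

theorem modSat_eq_phaseMean (hodd : ∀ x, σ (-x) = -σ x) (hcont : Continuous σ) (r : ℝ) :
    modSat σ r = phaseMean fun s => σ (r * Real.sin s) * Real.sin s := by
  set g : ℝ → ℝ := fun s => σ (r * Real.sin s) * Real.sin s with hg
  have hint : ∀ a b, IntervalIntegrable g volume a b :=
    (by fun_prop : Continuous g).intervalIntegrable
  have half : ∫ s in (0 : ℝ)..π, g s = 2 * ∫ s in (0 : ℝ)..(π / 2), g s := by
    have reflect := intervalIntegral.integral_comp_sub_left (a := 0) (b := π / 2) g π
    rw [sub_zero, sub_half] at reflect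
    rw [← intervalIntegral.integral_add_adjacent_intervals (hint 0 (π / 2)) (hint _ _), ← reflect,
      two_mul]
    simp [hg]
  have full : ∫ s in (0 : ℝ)..(2 * π), g s = 2 * ∫ s in (0 : ℝ)..π, g s := by
    have translate := intervalIntegral.integral_comp_add_right (a := 0) (b := π) g π
    rw [zero_add, ← two_mul] at translate
    rw [← intervalIntegral.integral_add_adjacent_intervals (hint 0 π) (hint _ _), ← translate,
      two_mul]
    simp [hg, hodd]
  have quarter : modSat σ r = 2 / π * ∫ s in (0 : ℝ)..(π / 2), g s := by
    simp only [modSat, hg, mul_comm]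
  rw [quarter, phaseMean, full, half, smul_eq_mul]
  field_simp

theorem fvec_eq_smul (z : E2) : fvec σ z = (modSat σ ‖z‖ / ‖z‖) • z := by
  rw [fvec]
  split_ifs with hz
  · rw [hz, smul_zero]
  · rfl

theorem fvec_smul_phaseVec (h0 : σ 0 = 0) {r : ℝ} (hr : 0 ≤ r) (φ : ℝ) :
    fvec σ (r • phaseVec φ) = modSat σ r • phaseVec φ := by
  rw [fvec_eq_smul, norm_smul, norm_phaseVec, mul_one, Real.norm_of_nonneg hr, smul_smul]
  rcases hr.eq_or_lt with rfl | hpos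
  · rw [modSat_zero h0, mul_zero]
  · rw [div_mul_cancel₀ _ hpos.ne']

theorem norm_fvec (h0 : σ 0 = 0) (z : E2) : ‖fvec σ z‖ = |modSat σ ‖z‖| := by
  obtain ⟨φ, hφ⟩ := exists_norm_smul_phaseVec_eq z
  nth_rw 1 [← hφ]
  rw [fvec_smul_phaseVec h0 (norm_nonneg z), norm_smul, norm_phaseVec, mul_one, Real.norm_eq_abs]

theorem hasGradientAt_integral_modSat_norm (hcont : Continuous σ) (h0 : σ 0 = 0) (z : E2) :
    HasGradientAt (fun z : E2 => ∫ ξ in (0 : ℝ)..‖z‖, modSat σ ξ) (fvec σ z) z := by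
  rw [fvec_eq_smul]
  exact hasGradientAt_comp_norm ((continuous_modSat hcont).integral_hasStrictDerivAt 0 _).hasDerivAt
    fun hz => by rw [hz, norm_zero, modSat_zero h0]

theorem phaseMean_comp_sin_mul_cos (hcont : Continuous σ) (r : ℝ) :
    phaseMean (fun s => σ (r * Real.sin s) * Real.cos s) = 0 := by
  have hsubst := intervalIntegral.integral_comp_mul_deriv (a := 0) (b := 2 * π)
    (g := fun x => σ (r * x)) (fun s _ => Real.hasDerivAt_sin s)
    Real.continuous_cos.continuousOn (by fun_prop)
  rw [Real.sin_zero, Real.sin_two_pi, intervalIntegral.integral_same] at hsubst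
  exact (congrArg _ hsubst).trans (smul_zero _)

-- In polar form `z = r b(φ)`, starting the period at `φ - π / 2` turns the argument of `σ` into
-- `r sin s`, so that the components of the mean along `b(φ)` and across it decouple.
theorem phaseMean_feedback (hodd : ∀ x, σ (-x) = -σ x) (hcont : Continuous σ) (z : E2) :
    phaseMean (feedback σ · z) = fvec σ z := by
  have h0 : σ 0 = 0 := by simpa [eq_neg_iff_add_eq_zero] using hodd 0
  obtain ⟨φ, hφ⟩ := exists_norm_smul_phaseVec_eq z
  have polar : ∀ s, feedback σ (φ - π / 2 + s) z =
      (σ (‖z‖ * Real.sin s) * Real.cos s) • phaseVec (φ - π / 2)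
        + (σ (‖z‖ * Real.sin s) * Real.sin s) • phaseVec φ := fun s => by
    have hinner : ⟪phaseVec (φ - π / 2 + s), z⟫ = ‖z‖ * Real.sin s := by
      nth_rw 1 [← hφ]
      rw [inner_smul_right, inner_phaseVec_phaseVec, ← Real.cos_sub_pi_div_two]
      ring_nf
    rw [feedback, hinner, add_comm, phaseVec_add, sub_add_cancel, smul_add, smul_smul, smul_smul]
  rw [← phaseMean_comp_add_left (periodic_feedback z) (φ - π / 2), funext polar,
    phaseMean_add (Continuous.intervalIntegrable (by fun_prop) _ _)
      (Continuous.intervalIntegrable (by fun_prop) _ _),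
    phaseMean_smul_const, phaseMean_smul_const, phaseMean_comp_sin_mul_cos hcont, zero_smul,
    zero_add, ← modSat_eq_phaseMean hodd hcont, ← fvec_smul_phaseVec h0 (norm_nonneg z), hφ]

namespace IsWeakSaturation

theorem norm_fvec_le (hσ : IsWeakSaturation σ A L) (z : E2) : ‖fvec σ z‖ ≤ A := by
  rw [norm_fvec hσ.map_zero]
  exact abs_modSat_le hσ.abs_map_le _

theorem fvec_eq_phaseMean (hσ : IsWeakSaturation σ A L) (z : E2) :
    fvec σ z = phaseMean (feedback σ · z) :=
  (phaseMean_feedback hσ.odd hσ.continuous z).symm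

theorem inner_fvec (hσ : IsWeakSaturation σ A L) (v z : E2) :
    ⟪v, fvec σ z⟫ = phaseMean fun s => σ ⟪phaseVec s, z⟫ * ⟪phaseVec s, v⟫ := by
  have := hσ.continuous
  rw [hσ.fvec_eq_phaseMean, inner_phaseMean (Continuous.intervalIntegrable (by
    unfold feedback; fun_prop) _ _)]
  simp only [feedback, inner_smul_right, real_inner_comm]

theorem V0_le (hσ : IsWeakSaturation σ A L) (z y : E2) :
    V0 σ z y ≤ ‖y‖ ^ 2 + A * ‖z‖ + A * ‖z - y‖ := by
  have integral_le : ∀ r, 0 ≤ r → ∫ ξ in (0 : ℝ)..r, modSat σ ξ ≤ A * r := fun r hr => by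
    have habs := intervalIntegral.norm_integral_le_of_norm_le_const (a := 0) (b := r)
      (f := modSat σ) fun ξ _ => abs_modSat_le hσ.abs_map_le ξ
    rw [sub_zero, abs_of_nonneg hr] at habs
    exact (le_abs_self _).trans habs
  exact add_le_add (add_le_add_right (integral_le _ (norm_nonneg z)) _)
    (integral_le _ (norm_nonneg (z - y)))

end IsWeakSaturation

end AveragedField

section Corrector

variable {σ : ℝ → ℝ} {A : ℝ} {L : NNReal}

/-- The first-order averaging corrector: as a function of the phase, it is a primitive of the
deviation `feedback σ θ z - fvec σ z` of the feedback from its mean. -/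
def corrector (σ : ℝ → ℝ) (θ : ℝ) (z : E2) : E2 := phaseMean fun s => s • feedback σ (θ + s) z

/-- The differential of `corrector σ θ` at `z`, applied to `v`. -/
def correctorDeriv (σ : ℝ → ℝ) (θ : ℝ) (z v : E2) : E2 :=
  phaseMean fun s => s • feedbackDeriv σ (θ + s) z v

/-- The differential of the averaged field `fvec σ` at `z`, applied to `v`. -/
def fieldDeriv (σ : ℝ → ℝ) (z v : E2) : E2 := phaseMean (feedbackDeriv σ · z v)

/-- The quadratic form `v ↦ ⟪v, Df(z) v⟫` of the differential of the averaged field `f`, which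
measures the growth in `y` of all the error terms of the averaging. -/
def slopeForm (σ : ℝ → ℝ) (z v : E2) : ℝ :=
  phaseMean fun s => deriv σ ⟪phaseVec s, z⟫ * ⟪phaseVec s, v⟫ ^ 2

theorem abs_sub_mul_two_mul_add_le {q r : ℝ} (hq : |q| ≤ A) (hr : |r| ≤ A) (p : ℝ) :
    |(p - q) * (2 * p + r)| ≤ 4 * p ^ 2 + 4 * A ^ 2 := by
  have hq2 := sq_le_sq.2 (hq.trans (le_abs_self A))
  have hr2 := sq_le_sq.2 (hr.trans (le_abs_self A))
  refine abs_le.2 ⟨?_, ?_⟩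
  · linarith [sq_nonneg (p + r / 2), sq_nonneg (p - q), sq_nonneg (q - r), sq_nonneg p, sq_nonneg A]
  · linarith [sq_nonneg (p - r / 2), sq_nonneg (p + q), sq_nonneg (q + r), sq_nonneg A]

namespace IsWeakSaturation

theorem hasDerivAt_fvec (hσ : IsWeakSaturation σ A L) {z : ℝ → E2} {z' : E2} {t : ℝ}
    (hz : HasDerivAt z z' t) :
    HasDerivAt (fun r => fvec σ (z r)) (fieldDeriv σ (z t) z') t := by
  simpa [fieldDeriv, hσ.fvec_eq_phaseMean] using
    hσ.hasDerivAt_phaseMean_smul_feedback (continuous_const (y := (1 : ℝ))) hz 0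

theorem phaseMean_smul_feedbackPhaseDeriv (hσ : IsWeakSaturation σ A L) (θ : ℝ) (z : E2) :
    phaseMean (fun s => s • feedbackPhaseDeriv σ (θ + s) z) = feedback σ θ z - fvec σ z := by
  have hderiv : ∀ s, HasDerivAt (fun s => feedback σ (θ + s) z)
      (feedbackPhaseDeriv σ (θ + s) z) s := fun s => by
    simpa [feedbackDeriv] using hasDerivAt_feedback hσ.differentiable
      ((hasDerivAt_id s).const_add θ) (hasDerivAt_const s z)
  have hint : IntervalIntegrable (fun s => feedbackPhaseDeriv σ (θ + s) z) volume 0 (2 * π) := by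
    simpa using (hσ.intervalIntegrable_feedbackPhaseDeriv z θ (θ + 2 * π)).comp_add_left θ
  have by_parts := intervalIntegral.integral_smul_deriv_eq_deriv_smul (u := fun s => s)
    (fun s _ => hasDerivAt_id s) (fun s _ => hderiv s) (by simp) hint
  simp only [one_smul, zero_smul, sub_zero, periodic_feedback z θ] at by_parts
  rw [phaseMean, by_parts, smul_sub, inv_smul_smul₀ (by positivity), hσ.fvec_eq_phaseMean,
    ← phaseMean_comp_add_left (periodic_feedback z) θ, phaseMean]

theorem hasDerivAt_corrector (hσ : IsWeakSaturation σ A L) {z : ℝ → E2} {z' : E2} {t : ℝ}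
    (hz : HasDerivAt z z' t) (ω : ℝ) :
    HasDerivAt (fun r => corrector σ (ω * r) (z r))
      (ω • (feedback σ (ω * t) (z t) - fvec σ (z t)) + correctorDeriv σ (ω * t) (z t) z') t := by
  have hphase : IntervalIntegrable (fun s => s • feedbackPhaseDeriv σ (ω * t + s) (z t))
      volume 0 (2 * π) := by
    simpa using ((hσ.intervalIntegrable_feedbackPhaseDeriv (z t) (ω * t)
      (ω * t + 2 * π)).comp_add_left (ω * t)).continuousOn_smul continuousOn_id
  have hspace : IntervalIntegrable (fun s => s • feedbackDeriv σ (ω * t + s) (z t) z')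
      volume 0 (2 * π) := by
    simpa using ((hσ.intervalIntegrable_feedbackDeriv (z t) z' (ω * t)
      (ω * t + 2 * π)).comp_add_left (ω * t)).continuousOn_smul continuousOn_id
  refine (hσ.hasDerivAt_phaseMean_smul_feedback continuous_id hz ω).congr_deriv ?_
  rw [← hσ.phaseMean_smul_feedbackPhaseDeriv, ← phaseMean_const_smul]
  simp only [id, smul_add, smul_comm _ ω]
  exact phaseMean_add (hphase.smul ω) hspace

theorem norm_corrector_le (hσ : IsWeakSaturation σ A L) (θ : ℝ) (z : E2) :
    ‖corrector σ θ z‖ ≤ 2 * π * A := by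
  have hcont : Continuous fun s => feedback σ s z :=
    hσ.continuous_feedback.comp (f := fun s : ℝ => (s, z)) (by fun_prop)
  refine (norm_phaseMean_smul_comp_add_left_le (periodic_feedback z)
    hcont.intervalIntegrable θ).trans ?_
  refine mul_le_mul_of_nonneg_left ?_ (by positivity)
  calc phaseMean (fun s => ‖feedback σ s z‖)
      ≤ phaseMean fun _ => A := phaseMean_mono (hcont.norm.intervalIntegrable _ _) (by simp)
        fun s => hσ.norm_feedback_le s z
    _ = A := phaseMean_const A

theorem slopeForm_nonneg (hσ : IsWeakSaturation σ A L) (z v : E2) : 0 ≤ slopeForm σ z v := by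
  rw [slopeForm, ← phaseMean_const (0 : ℝ)]
  exact phaseMean_mono (by simp)
    ((hσ.intervalIntegrable_deriv_comp (by fun_prop) _ _).mul_continuousOn (by fun_prop))
    fun s => mul_nonneg (hσ.deriv_nonneg _) (sq_nonneg _)

theorem phaseMean_deriv_mul_le (hσ : IsWeakSaturation σ A L) {g : ℝ → ℝ} (hg : Continuous g)
    {α β : ℝ} (hβ : 0 ≤ β) {z y : E2} (hle : ∀ s, g s ≤ α * ⟪phaseVec s, y⟫ ^ 2 + β) :
    phaseMean (fun s => deriv σ ⟪phaseVec s, z⟫ * g s) ≤ α * slopeForm σ z y + β * L := by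
  have hint : ∀ {q : ℝ → ℝ}, Continuous q →
      IntervalIntegrable (fun s => deriv σ ⟪phaseVec s, z⟫ * q s) volume 0 (2 * π) := fun hq =>
    (hσ.intervalIntegrable_deriv_comp (by fun_prop) _ _).mul_continuousOn hq.continuousOn
  calc phaseMean (fun s => deriv σ ⟪phaseVec s, z⟫ * g s)
      ≤ phaseMean fun s =>
          α * (deriv σ ⟪phaseVec s, z⟫ * ⟪phaseVec s, y⟫ ^ 2) + β * L := by
        refine phaseMean_mono (hint hg) (((hint (by fun_prop)).const_mul α).add (by simp))
          fun s => ?_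
        nlinarith [mul_le_mul_of_nonneg_left (hle s) (hσ.deriv_nonneg ⟪phaseVec s, z⟫),
          mul_le_mul_of_nonneg_left (hσ.deriv_le ⟪phaseVec s, z⟫) hβ]
    _ = α * slopeForm σ z y + β * L := by
        rw [phaseMean_add ((hint (by fun_prop)).const_mul α) (by simp), phaseMean_const_mul,
          phaseMean_const, slopeForm]

theorem norm_feedbackDeriv (hσ : IsWeakSaturation σ A L) (θ : ℝ) (z v : E2) :
    ‖feedbackDeriv σ θ z v‖ = deriv σ ⟪phaseVec θ, z⟫ * |⟪phaseVec θ, v⟫| := by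
  rw [feedbackDeriv, norm_smul, norm_phaseVec, mul_one, norm_mul,
    Real.norm_of_nonneg (hσ.deriv_nonneg _), Real.norm_eq_abs]

theorem norm_fieldDeriv_le (hσ : IsWeakSaturation σ A L) (z y : E2) {u : E2} (hu : ‖u‖ ≤ A) :
    ‖fieldDeriv σ z (y - u)‖ ≤ slopeForm σ z y + (1 + A) * L := by
  have hA := hσ.bound_nonneg
  refine (norm_phaseMean_le _).trans ?_
  simp only [hσ.norm_feedbackDeriv]
  simpa using hσ.phaseMean_deriv_mul_le (α := 1) (β := 1 + A) (z := z) (y := y)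
    (g := fun s => |⟪phaseVec s, y - u⟫|) (by fun_prop) (by positivity) fun s => by
      have hpu := (abs_inner_phaseVec_le s u).trans hu
      have hsub := abs_sub ⟪phaseVec s, y⟫ ⟪phaseVec s, u⟫
      rw [← inner_sub_right] at hsub
      nlinarith [sq_abs ⟪phaseVec s, y⟫, sq_nonneg (|⟪phaseVec s, y⟫| - 1)]

theorem le_inner_fieldDeriv (hσ : IsWeakSaturation σ A L) (z y : E2) {u : E2} (hu : ‖u‖ ≤ A) :
    slopeForm σ z y / 2 - A ^ 2 / 2 * L ≤ ⟪y, fieldDeriv σ z (y - u)⟫ := by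
  have hneg : -⟪y, fieldDeriv σ z (y - u)⟫ = phaseMean fun s =>
      deriv σ ⟪phaseVec s, z⟫ * -(⟪phaseVec s, y - u⟫ * ⟪phaseVec s, y⟫) := by
    rw [fieldDeriv, inner_phaseMean (hσ.intervalIntegrable_feedbackDeriv z (y - u) _ _),
      neg_eq_neg_one_mul, ← phaseMean_const_mul]
    simp only [feedbackDeriv, inner_smul_right, real_inner_comm]
    ring_nf
  have hle := hσ.phaseMean_deriv_mul_le (α := -(1 / 2)) (β := A ^ 2 / 2) (z := z) (y := y)
    (g := fun s => -(⟪phaseVec s, y - u⟫ * ⟪phaseVec s, y⟫)) (by fun_prop) (by positivity)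
    fun s => by
      have hsq := sq_le_sq.2 (((abs_inner_phaseVec_le s u).trans hu).trans (le_abs_self A))
      rw [inner_sub_right]
      nlinarith [sq_nonneg (⟪phaseVec s, y⟫ - ⟪phaseVec s, u⟫)]
  rw [← hneg] at hle
  linarith

theorem inner_correctorDeriv_le (hσ : IsWeakSaturation σ A L) (θ : ℝ) (z y : E2) {u c : E2}
    (hu : ‖u‖ ≤ A) (hc : ‖c‖ ≤ A) :
    ⟪(2 : ℝ) • y + c, correctorDeriv σ θ z (y - u)⟫ ≤
      2 * π * (4 * slopeForm σ z y + 4 * A ^ 2 * L) := by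
  set w := (2 : ℝ) • y + c with hw
  have hint := hσ.intervalIntegrable_feedbackDeriv z (y - u)
  have hinner : ⟪w, correctorDeriv σ θ z (y - u)⟫ =
      phaseMean fun s => s • ⟪w, feedbackDeriv σ (θ + s) z (y - u)⟫ := by
    rw [correctorDeriv, inner_phaseMean (by
      simpa using ((hint θ (θ + 2 * π)).comp_add_left θ).continuousOn_smul continuousOn_id)]
    simp only [inner_smul_right, smul_eq_mul]
  have hperiodic : Function.Periodic (fun s => ⟪w, feedbackDeriv σ s z (y - u)⟫) (2 * π) :=
    (periodic_feedbackDeriv z (y - u)).comp (inner ℝ w)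
  have hnorm : ∀ s, ‖⟪w, feedbackDeriv σ s z (y - u)⟫‖ =
      deriv σ ⟪phaseVec s, z⟫ * |⟪phaseVec s, y - u⟫ * ⟪phaseVec s, w⟫| := fun s => by
    rw [feedbackDeriv, inner_smul_right, real_inner_comm _ w, norm_mul, norm_mul,
      Real.norm_of_nonneg (hσ.deriv_nonneg _), mul_assoc, ← norm_mul, Real.norm_eq_abs]
  have hle := hσ.phaseMean_deriv_mul_le (α := 4) (β := 4 * A ^ 2) (z := z) (y := y)
    (g := fun s => |⟪phaseVec s, y - u⟫ * ⟪phaseVec s, w⟫|) (by fun_prop) (by positivity)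
    fun s => by
      rw [hw, inner_sub_right, inner_add_right, inner_smul_right]
      exact abs_sub_mul_two_mul_add_le ((abs_inner_phaseVec_le s u).trans hu)
        ((abs_inner_phaseVec_le s c).trans hc) _
  rw [hinner]
  refine (le_abs_self _).trans ((norm_phaseMean_smul_comp_add_left_le hperiodic
    (fun a b => ⟨(innerSL ℝ w).integrable_comp (hint a b).1,
      (innerSL ℝ w).integrable_comp (hint a b).2⟩) θ).trans ?_)
  rw [funext hnorm]
  exact mul_le_mul_of_nonneg_left hle (by positivity)

end IsWeakSaturation

end Corrector

section Lyapunov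

variable {σ : ℝ → ℝ} {A : ℝ} {L : NNReal}

/-- The rate at which `V0` decreases along the averaged system `ż = y - f(z)`, `ẏ = -f(z)`,
where `f = fvec σ`. -/
def dissipation (σ : ℝ → ℝ) (z y : E2) : ℝ :=
  ‖fvec σ z‖ ^ 2 + ⟪y, fvec σ z - fvec σ (z - y)⟫

/-- The term whose multiple by `ε / 2π` is added to `V0` to obtain a Lyapunov function of the
time-varying system: the first summand removes the oscillating part of the derivative of `V0`, and
the second absorbs the terms quadratic in `y` that the first one produces. -/
def correction (σ : ℝ → ℝ) (k θ : ℝ) (z y : E2) : ℝ :=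
  ⟪(2 : ℝ) • y + fvec σ z, corrector σ θ z⟫ - k * ⟪y, fvec σ z⟫

/-- The derivative of `correction σ k θ z y` along `ż = y - u`, `ẏ = -u` at frozen phase `θ`. -/
def correctionDeriv (σ : ℝ → ℝ) (k θ : ℝ) (z y u : E2) : ℝ :=
  ⟪fieldDeriv σ z (y - u) - (2 : ℝ) • u, corrector σ θ z⟫
    + ⟪(2 : ℝ) • y + fvec σ z, correctorDeriv σ θ z (y - u)⟫
    - k * (⟪y, fieldDeriv σ z (y - u)⟫ - ⟪u, fvec σ z⟫)

theorem hasDerivAt_V0 (hcont : Continuous σ) (h0 : σ 0 = 0) {z y : ℝ → E2} {u : E2} {t : ℝ}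
    (hz : HasDerivAt z (y t - u) t) (hy : HasDerivAt y (-u) t) :
    HasDerivAt (fun r => V0 σ (z r) (y r))
      (-dissipation σ (z t) (y t) - ⟪(2 : ℝ) • y t + fvec σ (z t), u - fvec σ (z t)⟫) t := by
  have hpotential : ∀ {x : ℝ → E2} {x' : E2}, HasDerivAt x x' t →
      HasDerivAt (fun r => ∫ ξ in (0 : ℝ)..‖x r‖, modSat σ ξ) ⟪fvec σ (x t), x'⟫ t := fun hx =>
    (hasGradientAt_integral_modSat_norm hcont h0 _).hasFDerivAt.comp_hasDerivAt t hx
  refine ((hy.norm_sq.add (hpotential hz)).add (hpotential (hz.sub hy))).congr_deriv ?_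
  simp only [dissipation, Pi.sub_apply, inner_sub_right, inner_add_left, inner_neg_right,
    real_inner_smul_left, real_inner_self_eq_norm_sq]
  rw [real_inner_comm (y t) (fvec σ (z t)), real_inner_comm (y t) (fvec σ (z t - y t))]
  ring

namespace IsWeakSaturation

theorem hasDerivAt_correction (hσ : IsWeakSaturation σ A L) {z y : ℝ → E2} {u : E2} {t : ℝ}
    (hz : HasDerivAt z (y t - u) t) (hy : HasDerivAt y (-u) t) (k ω : ℝ) :
    HasDerivAt (fun r => correction σ k (ω * r) (z r) (y r))
      (ω * ⟪(2 : ℝ) • y t + fvec σ (z t), feedback σ (ω * t) (z t) - fvec σ (z t)⟫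
        + correctionDeriv σ k (ω * t) (z t) (y t) u) t := by
  have hfield := hσ.hasDerivAt_fvec hz
  refine (((hy.const_smul (2 : ℝ)).add hfield).inner ℝ (hσ.hasDerivAt_corrector hz ω)
    |>.sub ((hy.inner ℝ hfield).const_mul k)).congr_deriv ?_
  simp only [correctionDeriv, Pi.add_apply, Pi.smul_apply, inner_add_right, inner_add_left,
    inner_sub_left, inner_neg_left, inner_smul_right, smul_neg]
  ring

theorem abs_correction_le (hσ : IsWeakSaturation σ A L) {k : ℝ} (hk : 0 ≤ k) (θ : ℝ) (z y : E2) :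
    |correction σ k θ z y| ≤ (2 * π * A * (2 + A) + k * A) * (1 + ‖y‖) := by
  have hA := hσ.bound_nonneg
  have hf := hσ.norm_fvec_le z
  have oscillating : |⟪(2 : ℝ) • y + fvec σ z, corrector σ θ z⟫| ≤
      (2 * ‖y‖ + A) * (2 * π * A) := by
    refine (abs_real_inner_le_norm _ _).trans ?_
    gcongr
    · exact (norm_add_le _ _).trans (by simpa [norm_smul] using hf)
    · exact hσ.norm_corrector_le θ z
  have absorbing : |k * ⟪y, fvec σ z⟫| ≤ k * (‖y‖ * A) := by
    rw [abs_mul, abs_of_nonneg hk]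
    gcongr
    exact (abs_real_inner_le_norm _ _).trans (by gcongr)
  calc |correction σ k θ z y|
      ≤ (2 * ‖y‖ + A) * (2 * π * A) + k * (‖y‖ * A) :=
        (abs_sub _ _).trans (add_le_add oscillating absorbing)
    _ ≤ (2 * π * A * (2 + A) + k * A) * (1 + ‖y‖) := by
        have : 0 ≤ 2 * π * A * (2 + A * ‖y‖) + k * A := by positivity
        linarith

-- The quadratic form `slopeForm σ z y` is the only unbounded contribution; it enters with the
-- factor `2π (A + 4) - k / 2`.
theorem exists_correctionDeriv_le (hσ : IsWeakSaturation σ A L) :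
    ∃ k ≥ 0, ∃ C, ∀ θ z y u, ‖u‖ ≤ A → correctionDeriv σ k θ z y u ≤ C := by
  have hA := hσ.bound_nonneg
  refine ⟨4 * π * (A + 4), by positivity,
    (2 * A + (1 + A) * L) * (2 * π * A) + 2 * π * (4 * A ^ 2 * L)
      + 4 * π * (A + 4) * (A ^ 2 + A ^ 2 / 2 * L), fun θ z y u hu => ?_⟩
  have hf := hσ.norm_fvec_le z
  have hQ := hσ.slopeForm_nonneg z y
  have field_term : ⟪fieldDeriv σ z (y - u) - (2 : ℝ) • u, corrector σ θ z⟫ ≤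
      (slopeForm σ z y + (1 + A) * L + 2 * A) * (2 * π * A) := by
    refine (real_inner_le_norm _ _).trans ?_
    gcongr
    · refine (norm_sub_le _ _).trans (add_le_add (hσ.norm_fieldDeriv_le z y hu) ?_)
      simpa [norm_smul] using hu
    · exact hσ.norm_corrector_le θ z
  have corrector_term := hσ.inner_correctorDeriv_le θ z y hu hf
  have absorbing_term : slopeForm σ z y / 2 - A ^ 2 / 2 * L - A ^ 2 ≤
      ⟪y, fieldDeriv σ z (y - u)⟫ - ⟪u, fvec σ z⟫ := by
    refine sub_le_sub (hσ.le_inner_fieldDeriv z y hu) ((real_inner_le_norm _ _).trans ?_)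
    rw [sq]
    gcongr
  have scaled := mul_le_mul_of_nonneg_left absorbing_term
    (by positivity : 0 ≤ 4 * π * (A + 4))
  rw [correctionDeriv]
  linarith

end IsWeakSaturation

theorem IsSolTeps.hasDerivAt_fst {ε t : ℝ} {z y : ℝ → E2} (h : IsSolTeps σ ε z y) (ht : 0 ≤ t) :
    HasDerivAt z (y t - feedback σ (2 * π / ε * t) (z t)) t := by
  rw [feedback, ← bvp_eq_phaseVec]
  exact (h t ht).1

theorem IsSolTeps.hasDerivAt_snd {ε t : ℝ} {z y : ℝ → E2} (h : IsSolTeps σ ε z y) (ht : 0 ≤ t) :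
    HasDerivAt y (-feedback σ (2 * π / ε * t) (z t)) t := by
  rw [feedback, ← bvp_eq_phaseVec, ← neg_smul]
  exact (h t ht).2

theorem IsSolTeps.hasDerivAt_V0_add_correction (hσ : IsWeakSaturation σ A L) {ε t : ℝ}
    {z y : ℝ → E2} (h : IsSolTeps σ ε z y) (hε : ε ≠ 0) (ht : 0 ≤ t) (k : ℝ) :
    HasDerivAt (fun r => V0 σ (z r) (y r)
        + ε / (2 * π) * correction σ k (2 * π / ε * r) (z r) (y r))
      (-dissipation σ (z t) (y t) + ε / (2 * π) * correctionDeriv σ k (2 * π / ε * t) (z t) (y t)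
        (feedback σ (2 * π / ε * t) (z t))) t := by
  have hz := h.hasDerivAt_fst ht
  have hy := h.hasDerivAt_snd ht
  refine ((hasDerivAt_V0 hσ.continuous hσ.map_zero hz hy).add
    ((hσ.hasDerivAt_correction hz hy k (2 * π / ε)).const_mul _)).congr_deriv ?_
  field_simp
  ring

theorem IsSolTeps.V0_add_correction_sub_le (hσ : IsWeakSaturation σ A L) {ε k C c T : ℝ}
    {z y : ℝ → E2} (h : IsSolTeps σ ε z y) (hε : 0 < ε) (hT : 0 ≤ T)
    (hC : ∀ θ z y u, ‖u‖ ≤ A → correctionDeriv σ k θ z y u ≤ C)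
    (hc : ∀ t ∈ Set.Icc 0 T, c ≤ dissipation σ (z t) (y t)) :
    V0 σ (z T) (y T) + ε / (2 * π) * correction σ k (2 * π / ε * T) (z T) (y T)
      - (V0 σ (z 0) (y 0) + ε / (2 * π) * correction σ k (2 * π / ε * 0) (z 0) (y 0))
      ≤ (ε / (2 * π) * C - c) * T := by
  have hderiv : ∀ t ∈ Set.Icc 0 T, _ := fun t ht =>
    h.hasDerivAt_V0_add_correction hσ hε.ne' ht.1 k
  refine ((convex_Icc 0 T).image_sub_le_mul_sub_of_deriv_le
    (fun t ht => (hderiv t ht).continuousAt.continuousWithinAt)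
    (fun t ht => (hderiv t (interior_subset ht)).differentiableAt.differentiableWithinAt)
    (fun t ht => ?_) 0 ⟨le_rfl, hT⟩ T ⟨hT, le_rfl⟩ hT).trans_eq (by rw [sub_zero])
  have hmem := interior_subset ht
  rw [(hderiv t hmem).deriv]
  have hremainder := mul_le_mul_of_nonneg_left (hC (2 * π / ε * t) (z t) (y t) _
    (hσ.norm_feedback_le (2 * π / ε * t) (z t))) (by positivity : 0 ≤ ε / (2 * π))
  linarith [hc t hmem]

theorem IsSolTeps.V0_sub_le (hσ : IsWeakSaturation σ A L) {ε k C c T : ℝ}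
    {z y : ℝ → E2} (h : IsSolTeps σ ε z y) (hε : 0 < ε) (hT : 0 ≤ T) (hk : 0 ≤ k)
    (hC : ∀ θ z y u, ‖u‖ ≤ A → correctionDeriv σ k θ z y u ≤ C)
    (hc : ∀ t ∈ Set.Icc 0 T, c ≤ dissipation σ (z t) (y t)) :
    V0 σ (z T) (y T) - V0 σ (z 0) (y 0) ≤ -c * T + ε / (2 * π) *
      (C * T + (2 * π * A * (2 + A) + k * A) * (2 + ‖y 0‖ + ‖y T‖)) := by
  have hstart := (le_abs_self _).trans
    (hσ.abs_correction_le hk (2 * π / ε * 0) (z 0) (y 0))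
  have hend := (neg_le_abs _).trans (hσ.abs_correction_le hk (2 * π / ε * T) (z T) (y T))
  have hcorrected := h.V0_add_correction_sub_le hσ hε hT hC hc
  have hscaled := mul_le_mul_of_nonneg_left (add_le_add hstart hend)
    (by positivity : 0 ≤ ε / (2 * π))
  linarith

end Lyapunov

section Dissipation

variable {σ : ℝ → ℝ} {A : ℝ} {L : NNReal}

theorem sub_map_sub_mul_nonneg (hmono : Monotone σ) (q p : ℝ) : 0 ≤ (σ q - σ (q - p)) * p := by
  rcases le_total 0 p with hp | hp
  · exact mul_nonneg (sub_nonneg.2 (hmono (by linarith))) hp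
  · exact mul_nonneg_of_nonpos_of_nonpos (sub_nonpos.2 (hmono (by linarith))) hp

theorem le_sub_map_sub_mul (hodd : ∀ x, σ (-x) = -σ x) (hmono : Monotone σ) {M q : ℝ}
    (hM : 0 ≤ σ M) (hq : |q| ≤ M) (hσq : |σ q| ≤ σ M / 2) (p : ℝ) :
    σ M / 2 * (|p| - 2 * M) ≤ (σ q - σ (q - p)) * p := by
  have hM0 : 0 ≤ M := (abs_nonneg q).trans hq
  obtain ⟨hqneg, hqpos⟩ := abs_le.1 hq
  obtain ⟨hσneg, hσpos⟩ := abs_le.1 hσq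
  rcases le_or_gt |p| (2 * M) with hsmall | hlarge
  · exact (mul_nonpos_of_nonneg_of_nonpos (by positivity) (by linarith)).trans
      (sub_map_sub_mul_nonneg hmono q p)
  · rcases lt_abs.1 hlarge with hp | hp
    · have hfar : σ (q - p) ≤ -σ M := hodd M ▸ hmono (by linarith)
      rw [abs_of_pos (by linarith)]
      nlinarith
    · have hfar : σ M ≤ σ (q - p) := hmono (by linarith)
      rw [abs_of_neg (by linarith)]
      nlinarith

namespace IsWeakSaturation

theorem inner_fvec_sub_fvec (hσ : IsWeakSaturation σ A L) (z y : E2) :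
    ⟪y, fvec σ z - fvec σ (z - y)⟫ = phaseMean fun s =>
      (σ ⟪phaseVec s, z⟫ - σ (⟪phaseVec s, z⟫ - ⟪phaseVec s, y⟫)) * ⟪phaseVec s, y⟫ := by
  have := hσ.continuous
  rw [inner_sub_right, hσ.inner_fvec, hσ.inner_fvec, ← phaseMean_sub
    (Continuous.intervalIntegrable (by fun_prop) _ _)
    (Continuous.intervalIntegrable (by fun_prop) _ _)]
  simp only [inner_sub_right, sub_mul]

theorem sq_norm_fvec_le_dissipation (hσ : IsWeakSaturation σ A L) (z y : E2) :
    ‖fvec σ z‖ ^ 2 ≤ dissipation σ z y := by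
  have := hσ.continuous
  rw [dissipation, hσ.inner_fvec_sub_fvec, le_add_iff_nonneg_right, ← phaseMean_const (0 : ℝ)]
  exact phaseMean_mono (by simp) (Continuous.intervalIntegrable (by fun_prop) _ _)
    fun s => sub_map_sub_mul_nonneg hσ.monotone _ _

theorem le_dissipation_of_norm_le (hσ : IsWeakSaturation σ A L) {M η : ℝ} (hM : 0 ≤ σ M)
    (hηM : η ≤ M) (hη : σ η ≤ σ M / 2) {z : E2} (hz : ‖z‖ ≤ η) (y : E2) :
    σ M / 2 * (‖y‖ / 2 - 2 * M) ≤ dissipation σ z y := by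
  have := hσ.continuous
  have hpointwise : ∀ s, σ M / 2 * (|⟪phaseVec s, y⟫| - 2 * M) ≤
      (σ ⟪phaseVec s, z⟫ - σ (⟪phaseVec s, z⟫ - ⟪phaseVec s, y⟫)) * ⟪phaseVec s, y⟫ := fun s => by
    have hq := (abs_inner_phaseVec_le s z).trans hz
    refine le_sub_map_sub_mul hσ.odd hσ.monotone hM (hq.trans hηM) (abs_le.2 ⟨?_, ?_⟩) _
    · linarith [hσ.odd η, hσ.monotone (abs_le.1 hq).1]
    · exact (hσ.monotone (abs_le.1 hq).2).trans hη
  calc σ M / 2 * (‖y‖ / 2 - 2 * M)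
      ≤ σ M / 2 * (phaseMean (fun s => |⟪phaseVec s, y⟫|) - phaseMean fun _ => 2 * M) := by
        rw [phaseMean_const]
        gcongr
        exact norm_div_two_le_phaseMean_abs_inner y
    _ = phaseMean fun s => σ M / 2 * (|⟪phaseVec s, y⟫| - 2 * M) := by
        rw [phaseMean_const_mul (σ M / 2), phaseMean_sub
          (Continuous.intervalIntegrable (by fun_prop) _ _) (by simp)]
    _ ≤ ⟪y, fvec σ z - fvec σ (z - y)⟫ := by
        rw [hσ.inner_fvec_sub_fvec]
        exact phaseMean_mono (Continuous.intervalIntegrable (by fun_prop) _ _)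
          (Continuous.intervalIntegrable (by fun_prop) _ _) hpointwise
    _ ≤ dissipation σ z y := le_add_of_nonneg_left (sq_nonneg _)

-- Either `z` is not small and `‖f(z)‖²` is bounded below, or `σ(bᵀz)` stays below half of `σ M`
-- while `σ(bᵀz - bᵀy)` exceeds `σ M` in absolute value for most phases as soon as `y` is large.
theorem exists_le_dissipation (hσ : IsWeakSaturation σ A L) :
    ∃ N ≥ 1, ∃ c > 0, ∀ z y, N ≤ ‖z‖ ∨ N ≤ ‖y‖ → c ≤ dissipation σ z y := by
  obtain ⟨M, hσM⟩ := hσ.exists_pos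
  have hM : 0 < M := hσ.monotone.reflect_lt (by rwa [hσ.map_zero])
  obtain ⟨η, ⟨hη0, hηM⟩, hη⟩ : σ M / 2 ∈ σ '' Set.Icc 0 M :=
    intermediate_value_Icc hM.le hσ.continuous.continuousOn
      ⟨by rw [hσ.map_zero]; positivity, by linarith⟩
  have hS : 0 < modSat σ η := modSat_pos hσ.continuous hσ.monotone hσ.map_zero hη0
    (by rw [hη]; positivity)
  have large_fst : ∀ z y, η ≤ ‖z‖ → modSat σ η ^ 2 ≤ dissipation σ z y := fun z y hz => by
    refine le_trans ?_ (hσ.sq_norm_fvec_le_dissipation z y)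
    rw [norm_fvec hσ.map_zero, sq_abs]
    gcongr
    exact monotone_modSat hσ.continuous hσ.monotone hz
  refine ⟨max 1 (8 * M), le_max_left _ _, min (modSat σ η ^ 2) (σ M * M), by positivity,
    fun z y hzy => ?_⟩
  rcases le_total η ‖z‖ with hz | hz
  · exact (min_le_left _ _).trans (large_fst z y hz)
  · have hy : 8 * M ≤ ‖y‖ := (le_max_right _ _).trans <| hzy.resolve_left fun h => by
      linarith [(le_max_right _ _).trans h]
    refine (min_le_right _ _).trans
      (le_trans ?_ (hσ.le_dissipation_of_norm_le hσM.le hηM hη.le hz y))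
    nlinarith

end IsWeakSaturation

end Dissipation

section Trajectories

variable {σ : ℝ → ℝ} {A ε t : ℝ} {L : NNReal} {z y : ℝ → E2}

theorem IsSolTeps.norm_snd_sub_le (hσ : IsWeakSaturation σ A L) (h : IsSolTeps σ ε z y)
    (ht : 0 ≤ t) : ‖y t - y 0‖ ≤ A * t := by
  simpa [abs_of_nonneg ht] using (convex_Ici (0 : ℝ)).norm_image_sub_le_of_norm_hasDerivWithin_le
    (fun s hs => (h.hasDerivAt_snd hs).hasDerivWithinAt)
    (fun s _ => (norm_neg _).trans_le (hσ.norm_feedback_le (2 * π / ε * s) (z s)))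
    Set.self_mem_Ici ht

theorem IsSolTeps.norm_fst_sub_le (hσ : IsWeakSaturation σ A L) (h : IsSolTeps σ ε z y)
    (ht : 0 ≤ t) : ‖z t - z 0‖ ≤ (‖y 0‖ + A * t + A) * t := by
  have norm_velocity_le : ∀ s ∈ Set.Icc 0 t,
      ‖y s - feedback σ (2 * π / ε * s) (z s)‖ ≤ ‖y 0‖ + A * t + A := fun s hs =>
    calc ‖y s - feedback σ (2 * π / ε * s) (z s)‖
        ≤ ‖y 0‖ + ‖y s - y 0‖ + ‖feedback σ (2 * π / ε * s) (z s)‖ :=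
          (norm_sub_le _ _).trans (add_le_add_left (norm_le_norm_add_norm_sub' _ _) _)
      _ ≤ ‖y 0‖ + A * t + A := by
          gcongr
          · exact (h.norm_snd_sub_le hσ hs.1).trans
              (mul_le_mul_of_nonneg_left hs.2 hσ.bound_nonneg)
          · exact hσ.norm_feedback_le _ _
  simpa [abs_of_nonneg ht] using (convex_Icc 0 t).norm_image_sub_le_of_norm_hasDerivWithin_le
    (fun s hs => (h.hasDerivAt_fst hs.1).hasDerivWithinAt) norm_velocity_le
    ⟨le_rfl, ht⟩ ⟨ht, le_rfl⟩

theorem IsSolTeps.norm_snd_ge_of_ge (hσ : IsWeakSaturation σ A L) (h : IsSolTeps σ ε z y)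
    (ht : 0 ≤ t) (htA : 2 * (1 + A) * t ≤ max 1 ‖y 0‖) {N : ℝ} (hN : 1 ≤ N)
    (hy : 2 * N ≤ ‖y 0‖) : N ≤ ‖y t‖ := by
  rw [max_eq_right (by linarith)] at htA
  linarith [norm_le_norm_add_norm_sub' (y 0) (y t), norm_sub_rev (y 0) (y t),
    h.norm_snd_sub_le hσ ht]

theorem IsWeakSaturation.exists_le_norm_or_le_norm (hσ : IsWeakSaturation σ A L) {N : ℝ}
    (hN : 1 ≤ N) : ∃ R > 0, ∀ ε z y, IsSolTeps σ ε z y → R ≤ V0 σ (z 0) (y 0) →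
      ∀ t, 0 ≤ t → 2 * (1 + A) * t ≤ max 1 ‖y 0‖ → N ≤ ‖z t‖ ∨ N ≤ ‖y t‖ := by
  have hA := hσ.bound_nonneg
  set D := (3 * N + A) * N
  have : 0 ≤ D := by positivity
  refine ⟨(2 * N) ^ 2 + A * (N + D) + A * (N + D + 2 * N), by positivity,
    fun ε z y h hR t ht htA => ?_⟩
  rcases le_or_gt (2 * N) ‖y 0‖ with hy | hy
  · exact .inr (h.norm_snd_ge_of_ge hσ ht htA hN hy)
  refine .inl (le_of_not_gt fun hz => hR.not_gt ?_)
  have htN : (1 + A) * t ≤ N := by linarith [max_le (by linarith : 1 ≤ 2 * N) hy.le]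
  have hAt : 0 ≤ A * t := mul_nonneg hA ht
  have hmove : ‖z t - z 0‖ ≤ D := (h.norm_fst_sub_le hσ ht).trans
    (mul_le_mul (by linarith) (by linarith) ht (by positivity))
  have hz0 : ‖z 0‖ ≤ N + D := by
    linarith [norm_le_norm_add_norm_sub' (z 0) (z t), norm_sub_rev (z 0) (z t)]
  calc V0 σ (z 0) (y 0) ≤ ‖y 0‖ ^ 2 + A * ‖z 0‖ + A * ‖z 0 - y 0‖ := hσ.V0_le _ _
    _ ≤ ‖y 0‖ ^ 2 + A * (N + D) + A * (N + D + 2 * N) := by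
      gcongr
      exact (norm_sub_le _ _).trans (add_le_add hz0 hy.le)
    _ < (2 * N) ^ 2 + A * (N + D) + A * (N + D + 2 * N) := by gcongr

theorem IsWeakSaturation.exists_V0_sub_le (hσ : IsWeakSaturation σ A L) :
    ∃ C > 0, ∀ ε > 0, ∀ z y T c, IsSolTeps σ ε z y → 2 * (1 + A) * T = max 1 ‖y 0‖ →
      (∀ t ∈ Set.Icc 0 T, c ≤ dissipation σ (z t) (y t)) →
      V0 σ (z T) (y T) - V0 σ (z 0) (y 0) ≤ (ε / (2 * π) * C - c) * T := by
  have hA := hσ.bound_nonneg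
  obtain ⟨k, hk, C, hC⟩ := hσ.exists_correctionDeriv_le
  set K := 2 * π * A * (2 + A) + k * A
  have : 0 ≤ K := by positivity
  refine ⟨|C| + 1 + 10 * (1 + A) * K, by positivity, fun ε hε z y T c h hT hc => ?_⟩
  have hm := le_max_left 1 ‖y 0‖
  have hT0 : 0 ≤ T := nonneg_of_mul_nonneg_right (by linarith) (by positivity : 0 < 2 * (1 + A))
  have hnorms : 2 + ‖y 0‖ + ‖y T‖ ≤ 10 * (1 + A) * T := by
    linarith [le_max_right 1 ‖y 0‖, norm_le_norm_add_norm_sub' (y T) (y 0),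
      h.norm_snd_sub_le hσ hT0]
  have hCT : C * T ≤ (|C| + 1) * T :=
    mul_le_mul_of_nonneg_right ((le_abs_self C).trans (by linarith)) hT0
  calc V0 σ (z T) (y T) - V0 σ (z 0) (y 0)
      ≤ -c * T + ε / (2 * π) * (C * T + K * (2 + ‖y 0‖ + ‖y T‖)) :=
        h.V0_sub_le hσ hε hT0 hk hC hc
    _ ≤ -c * T + ε / (2 * π) * ((|C| + 1) * T + K * (10 * (1 + A) * T)) := by gcongr
    _ = (ε / (2 * π) * (|C| + 1 + 10 * (1 + A) * K) - c) * T := by ring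

end Trajectories

theorem stmt12_general {σ : ℝ → ℝ} {A : ℝ} {L : NNReal} (hσ : IsWeakSaturation σ A L) :
    ∃ ε₀ > 0, ∃ R > 0, ∃ C₁ > 0, ∃ ρ : ℝ, 0 < ρ ∧ ρ < 1 ∧
      ∀ ε : ℝ, 0 < ε → ε < ε₀ → ∀ z₀ y₀ : E2, R ≤ V0 σ z₀ y₀ →
        ∃ T : ℝ, ρ * max 1 ‖y₀‖ ≤ T ∧ T ≤ 2 * ρ * max 1 ‖y₀‖ ∧
          ∀ z y : ℝ → E2, IsSolTeps σ ε z y → z 0 = z₀ → y 0 = y₀ →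
            V0 σ (z T) (y T) - V0 σ z₀ y₀ ≤ -C₁ * T := by
  have hA := hσ.bound_nonneg
  obtain ⟨N, hN, c, hc, dissipation_ge⟩ := hσ.exists_le_dissipation
  obtain ⟨R, hR, large_of_V0_ge⟩ := hσ.exists_le_norm_or_le_norm hN
  obtain ⟨C, hC, V0_sub_le⟩ := hσ.exists_V0_sub_le
  refine ⟨c / C, by positivity, R, hR, c / 2, by positivity, (2 * (1 + A))⁻¹, by positivity,
    inv_lt_one_of_one_lt₀ (by linarith), fun ε hε hε₀ z₀ y₀ hV => ?_⟩
  set T := (2 * (1 + A))⁻¹ * max 1 ‖y₀‖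
  have hT0 : 0 ≤ T := by positivity
  have hTA : 2 * (1 + A) * T = max 1 ‖y₀‖ := mul_inv_cancel_left₀ (by positivity) _
  refine ⟨T, le_rfl, by linarith, fun z y h hz hy => ?_⟩
  subst hz hy
  refine (V0_sub_le ε hε z y T c h hTA fun t ht => dissipation_ge _ _
    (large_of_V0_ge ε z y h hV t ht.1 (hTA ▸ by gcongr; exact ht.2))).trans ?_
  have hεC : ε / (2 * π) * C ≤ c / 2 :=
    calc ε / (2 * π) * C = ε * C / (2 * π) := by ring
      _ ≤ c / 2 := by
        gcongr
        · exact ((lt_div_iff₀ hC).1 hε₀).le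
        · linarith [Real.two_le_pi]
  exact mul_le_mul_of_nonneg_right (by linarith) hT0

/-- Key decay estimate for `(T_ε)`: for `ε` small, from any initial condition with
`V₀ ≥ R` there is a time `T ∈ [ρ max(1,‖y₀‖), 2ρ max(1,‖y₀‖)]` along which `V₀`
decreases by at least `C₁ T`. -/
theorem stmt12 (σ : ℝ → ℝ) (hσ : IsSaturation σ) :
    ∃ ε₀ > 0, ∃ R > 0, ∃ C₁ > 0, ∃ ρ : ℝ, 0 < ρ ∧ ρ < 1 ∧
      ∀ ε : ℝ, 0 < ε → ε < ε₀ → ∀ z₀ y₀ : E2, R ≤ V0 σ z₀ y₀ →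
        ∃ T : ℝ, ρ * max 1 ‖y₀‖ ≤ T ∧ T ≤ 2 * ρ * max 1 ‖y₀‖ ∧
          ∀ z y : ℝ → E2, IsSolTeps σ ε z y → z 0 = z₀ → y 0 = y₀ →
            V0 σ (z T) (y T) - V0 σ z₀ y₀ ≤ -C₁ * T := by
  obtain ⟨A, L, h⟩ := hσ.exists_isWeakSaturation
  exact stmt12_general h
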